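/- Fix an integer q ≥ 2 and reals 0 < a ≤ b. For n, m ∈ ℕ define W_q(n,m) = Σ over vectors n⃗ = (n_1,…,n_q) of nonnegative integers with n_1 + ⋯ + n_q = n of (n!/(n_1!⋯n_q!)) · (n² − Σ_{i=1}^q n_i²)^m. Then for every sequence (m_n) of natural numbers with a ≤ m_n/n ≤ b for all n ≥ 1, the ratio W_q(n, m_n) / [ n^{2 m_n} · (1 + (2/(q−1))·(m_n/n))^{−(q−1)/2} · (1 − 1/q)^{m_n} · q^n ] tends to 1 as n → ∞. -/

import Mathlib

/-!
Let `N` be the vector of colour counts of `n` independent uniformly random colours. Dividing the sum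
by `n ^ (2m) (1 - 1/q) ^ m q ^ n` turns it into the expectation of `(1 - X) ^ m`, where
`X = ∑ (N_j - n/q)² / (n² (1 - 1/q)) ∈ [0, 1]`. On `[0, 1]` the function `(1 - x) ^ m` is within
`8 / m` of `e ^ (-m x)`, so no moment or tail estimate for `N` is needed
(`abs_Wsum_div_sub_laplaceCounts_le`), and it remains to find the Laplace transform
`E e ^ (-(β²/2) ∑ (N_j - n/q)²)` with `n β²` bounded.

Write the exponential as a Gaussian average of characters `e ^ (i β ⟨g, N - n/q⟩)` and exchange sum
and integral. By the multinomial theorem the Laplace transform becomes the Gaussian average of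
`colorChar β g ^ n` (`integral_colorChar_pow`). For fixed `g`, second-order Taylor expansion shows
that this differs by a vanishing amount from `e ^ (-(n β² / 2) V(g))`, where
`V(g) = (1/q) ∑ (g_j - ḡ)²`. Both are bounded by `1`, so dominated convergence applies
(`tendsto_laplaceCounts_sub`). The Gaussian average of the latter is evaluated exactly by a linear
change of variables (`integral_gauss_meanDev`), which produces
`(1 + (2/(q-1)) (m/n)) ^ (-(q-1)/2)`. This is bounded away from `0` because `m / n ≤ b`, so a
vanishing difference gives a ratio tending to `1`.
-/

open Filter

/-- `W_q(n,m) = Σ_{n₁+⋯+n_q = n} (n!/(n₁!⋯n_q!)) (n² − Σ_i n_i²)^m`. -/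
noncomputable def Wsum (q n m : ℕ) : ℝ :=
  ∑ v ∈ Finset.Nat.antidiagonalTuple q n,
    (Nat.multinomial Finset.univ v : ℝ) *
      ((n : ℝ) ^ 2 - ∑ i : Fin q, (v i : ℝ) ^ 2) ^ m

open MeasureTheory


/-- The deviation of the `j`-th coordinate of `g` from the mean of all coordinates. -/
noncomputable def meanDev {q : ℕ} (g : Fin q → ℝ) (j : Fin q) : ℝ :=
  g j - (∑ i, g i) / q

/-- The characteristic function, at the point `β g`, of `e_J - (1/q, …, 1/q)`, where `J` is a
uniformly random colour and `e_J` the corresponding basis vector. -/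
noncomputable def colorChar {q : ℕ} (β : ℝ) (g : Fin q → ℝ) : ℂ :=
  (∑ j, Complex.exp (((β * meanDev g j : ℝ) : ℂ) * Complex.I)) / q

/-- The (unnormalised) standard Gaussian density on `Fin q → ℝ`. -/
noncomputable def gaussDens {q : ℕ} (g : Fin q → ℝ) : ℝ :=
  Real.exp (-(1 / 2) * ∑ i, g i ^ 2)

/-- The Laplace transform, at `β² / 2`, of the squared deviation `∑ (v_j - n/q)²` of the vector `v`
of colour counts of `n` independent uniformly random colours. -/
noncomputable def laplaceCounts (q n : ℕ) (β : ℝ) : ℝ :=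
  ∑ v ∈ Finset.Nat.antidiagonalTuple q n,
    (Nat.multinomial Finset.univ v : ℝ) / (q : ℝ) ^ n *
      Real.exp (-(β ^ 2 / 2) * ∑ j, ((v j : ℝ) - n / q) ^ 2)

/-! ### The multinomial theorem and elementary estimates -/

lemma sum_pow_antidiagonalTuple {R : Type*} [CommSemiring R] (q n : ℕ) (f : Fin q → R) :
    (∑ j, f j) ^ n = ∑ v ∈ Finset.Nat.antidiagonalTuple q n,
      (Nat.multinomial Finset.univ v : R) * ∏ j, f j ^ v j := by
  rw [Finset.sum_pow_eq_sum_piAntidiag]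
  refine Finset.sum_congr ?_ fun _ _ => rfl
  ext v
  simp [Finset.Nat.mem_antidiagonalTuple]

lemma sum_multinomial_div (q n : ℕ) (hq : 0 < q) :
    ∑ v ∈ Finset.Nat.antidiagonalTuple q n,
      (Nat.multinomial Finset.univ v : ℝ) / (q : ℝ) ^ n = 1 := by
  have h := sum_pow_antidiagonalTuple q n (fun _ => (1 : ℝ))
  simp only [Finset.sum_const, Finset.card_univ, Fintype.card_fin, nsmul_eq_mul, mul_one, one_pow,
    Finset.prod_const_one] at h
  rw [← Finset.sum_div, ← h, div_self]
  positivity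

/-- `(1 - x) ^ m` and `e ^ (-m x)` differ by `O(1/m)`, uniformly on `[0, 1]`: the difference is at
most `m x² e ^ (-(m-1)x)`, and `y² e ^ (-y)` is bounded. -/
lemma abs_one_sub_pow_sub_exp_le (m : ℕ) (hm : 2 ≤ m) (x : ℝ) (h0 : 0 ≤ x) (h1 : x ≤ 1) :
    |(1 - x) ^ m - Real.exp (-(m * x))| ≤ 8 / m := by
  obtain ⟨k, rfl⟩ : ∃ k, m = k + 1 := ⟨m - 1, by omega⟩
  have hk : (1 : ℝ) ≤ k := by exact_mod_cast (by omega : 1 ≤ k)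
  have hle : 1 - x ≤ Real.exp (-x) := by linarith [Real.add_one_le_exp (-x)]
  have e1 : Real.exp (-(((k + 1 : ℕ) : ℝ) * x)) = Real.exp (-x) ^ (k + 1) := by
    rw [← Real.exp_nat_mul]; congr 1; push_cast; ring
  rw [e1]
  have h := abs_pow_sub_pow_le (1 - x) (Real.exp (-x)) (k + 1)
  rw [abs_of_nonneg (by linarith : 0 ≤ 1 - x), abs_of_pos (Real.exp_pos _), max_eq_right hle,
    Nat.add_sub_cancel] at h
  have h2 : |1 - x - Real.exp (-x)| ≤ x ^ 2 := by
    have := Real.abs_exp_sub_one_sub_id_le (x := -x) (by rw [abs_neg, abs_of_nonneg h0]; exact h1)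
    rw [abs_sub_comm, neg_sq] at *
    rw [abs_sub_comm] at this
    convert this using 2; ring
  have h3 : (k * x) ^ 2 * Real.exp (-x) ^ k ≤ 2 := by
    have := Real.quadratic_le_exp_of_nonneg (x := k * x) (by positivity)
    rw [← Real.exp_nat_mul, show (k : ℝ) * -x = -(k * x) by ring, Real.exp_neg,
      ← div_eq_mul_inv, div_le_iff₀ (Real.exp_pos _)]
    have : 0 ≤ k * x := by positivity
    linarith
  refine h.trans ?_
  have h4 : |1 - x - Real.exp (-x)| * ((k + 1 : ℕ) : ℝ) * Real.exp (-x) ^ k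
      ≤ x ^ 2 * ((k + 1 : ℕ) : ℝ) * Real.exp (-x) ^ k := by gcongr
  refine h4.trans ?_
  rw [le_div_iff₀ (by positivity)]
  push_cast
  have h5 : ((k : ℝ) + 1) ^ 2 ≤ 4 * k ^ 2 := by nlinarith
  calc x ^ 2 * ((k : ℝ) + 1) * Real.exp (-x) ^ k * (k + 1)
      = ((k : ℝ) + 1) ^ 2 * (x ^ 2 * Real.exp (-x) ^ k) := by ring
    _ ≤ 4 * k ^ 2 * (x ^ 2 * Real.exp (-x) ^ k) := by gcongr
    _ = 4 * ((k * x) ^ 2 * Real.exp (-x) ^ k) := by ring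
    _ ≤ 8 := by linarith

/-! ### Deviations from the mean -/

lemma sum_meanDev {q : ℕ} (hq : 0 < q) (g : Fin q → ℝ) : ∑ j, meanDev g j = 0 := by
  have : (q : ℝ) ≠ 0 := by positivity
  simp only [meanDev, Finset.sum_sub_distrib, Finset.sum_const, Finset.card_univ, Fintype.card_fin,
    nsmul_eq_mul]
  field_simp
  ring

lemma sum_sq_eq_meanDev {q : ℕ} (hq : 0 < q) (g : Fin q → ℝ) :
    ∑ j, g j ^ 2 = ∑ j, meanDev g j ^ 2 + q * ((∑ i, g i) / q) ^ 2 := by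
  have h : ∀ j, g j ^ 2 =
      meanDev g j ^ 2 + 2 * ((∑ i, g i) / q) * meanDev g j + ((∑ i, g i) / q) ^ 2 := by
    intro j; unfold meanDev; ring
  rw [Finset.sum_congr rfl fun j _ => h j, Finset.sum_add_distrib, Finset.sum_add_distrib,
    ← Finset.mul_sum, sum_meanDev hq]
  simp

lemma continuous_meanDev {q : ℕ} (j : Fin q) : Continuous fun g : Fin q → ℝ => meanDev g j := by
  unfold meanDev; fun_prop

/-! ### Gaussian integrals -/

lemma integral_gauss_fourier {q : ℕ} (z : Fin q → ℝ) :
    ∫ g : Fin q → ℝ, (gaussDens g : ℂ) * Complex.exp (((∑ j, z j * g j : ℝ) : ℂ) * Complex.I) =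
      (((2 * Real.pi) ^ ((q : ℝ) / 2) * Real.exp (-(1 / 2) * ∑ j, z j ^ 2) : ℝ) : ℂ) := by
  have h := GaussianFourier.integral_cexp_neg_mul_sum_add (b := 1 / 2) (ι := Fin q) (by norm_num)
    (fun j => z j * Complex.I)
  have e : ∀ g : Fin q → ℝ, (gaussDens g : ℂ) *
      Complex.exp (((∑ j, z j * g j : ℝ) : ℂ) * Complex.I) =
      Complex.exp (-(1 / 2) * ∑ i, (g i : ℂ) ^ 2 + ∑ i, z i * Complex.I * g i) := by
    intro g
    rw [Complex.exp_add]
    unfold gaussDens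
    push_cast
    congr 2
    rw [Finset.sum_mul]
    exact Finset.sum_congr rfl fun _ _ => by ring
  simp_rw [e]
  rw [h]
  push_cast
  rw [Complex.ofReal_cpow (by positivity)]
  push_cast
  congr 2
  · ring
  · simp
  · simp only [mul_pow, Complex.I_sq]
    rw [← Finset.sum_mul]
    ring

lemma integral_gauss_pi {q : ℕ} {b : ℝ} (hb : 0 < b) :
    ∫ g : Fin q → ℝ, Real.exp (-b * ∑ i, g i ^ 2) = (Real.pi / b) ^ ((q : ℝ) / 2) := by
  have h := GaussianFourier.integral_cexp_neg_mul_sum_add (b := (b : ℂ)) (ι := Fin q) (by simpa)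
    (fun j => 0)
  have e : ∀ g : Fin q → ℝ, Complex.exp (-b * ∑ i, (g i : ℂ) ^ 2 + ∑ i, 0 * (g i : ℂ)) =
      ((Real.exp (-b * ∑ i, g i ^ 2) : ℝ) : ℂ) := by
    intro g; push_cast; simp
  simp_rw [e] at h
  rw [integral_complex_ofReal] at h
  apply Complex.ofReal_injective
  refine h.trans ?_
  rw [Complex.ofReal_cpow (by positivity)]
  push_cast
  simp

lemma integrable_gaussDens {q : ℕ} : Integrable (gaussDens : (Fin q → ℝ) → ℝ) := by
  have h := GaussianFourier.integrable_cexp_neg_mul_sum_add (b := 1 / 2) (ι := Fin q) (by norm_num)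
    (fun j => 0)
  refine h.norm.congr (ae_of_all _ fun g => ?_)
  simp only [Complex.norm_exp, gaussDens]
  congr 1
  have : (-(1 / 2) * ∑ i, (g i : ℂ) ^ 2 + ∑ i, 0 * (g i : ℂ)) =
      ((-(1 / 2) * ∑ i, g i ^ 2 : ℝ) : ℂ) := by push_cast; simp
  rw [this, Complex.ofReal_re]

lemma norm_gaussDens {q : ℕ} (g : Fin q → ℝ) : ‖gaussDens g‖ = gaussDens g :=
  Real.norm_of_nonneg (Real.exp_pos _).le

lemma continuous_gaussDens {q : ℕ} : Continuous (gaussDens : (Fin q → ℝ) → ℝ) := by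
  unfold gaussDens; fun_prop

/-- The quadratic form `½|g|² + t ∑ (g_j - ḡ)²` is `½ + t` times the squared norm of `M g`, where
`M = I + ((κ - 1)/q) J` (`J` the all-ones matrix) contracts the diagonal direction by
`κ = (1 + 2t) ^ (-1/2)`; as `det M = κ`, a linear change of variables evaluates the integral. -/
lemma integral_gauss_meanDev {q : ℕ} (hq : 0 < q) {t : ℝ} (ht : 0 ≤ t) :
    ∫ g : Fin q → ℝ, gaussDens g * Real.exp (-(t * ∑ j, meanDev g j ^ 2)) =
      (2 * Real.pi) ^ ((q : ℝ) / 2) * (1 + 2 * t) ^ (-(((q : ℝ) - 1) / 2)) := by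
  have hq' : (q : ℝ) ≠ 0 := by positivity
  set κ : ℝ := (Real.sqrt (1 + 2 * t))⁻¹ with hκ
  have hκ0 : 0 < κ := by positivity
  have hκ2 : κ ^ 2 = (1 + 2 * t)⁻¹ := by rw [hκ, inv_pow, Real.sq_sqrt (by positivity)]
  set M : Matrix (Fin q) (Fin q) ℝ :=
    1 + Matrix.replicateCol Unit (fun _ => (κ - 1) / q) *
      Matrix.replicateRow Unit (fun _ => (1 : ℝ)) with hM
  have hdet : M.det = κ := by
    rw [hM, Matrix.det_one_add_replicateCol_mul_replicateRow]
    simp [dotProduct]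
    field_simp
    ring
  have hMg : ∀ g j, Matrix.toLin' M g j = meanDev g j + κ * ((∑ i, g i) / q) := by
    intro g j
    rw [Matrix.toLin'_apply, hM, Matrix.add_mulVec, Matrix.one_mulVec]
    simp [Matrix.mulVec, dotProduct, Matrix.mul_apply, meanDev]
    rw [← Finset.mul_sum]
    field_simp
    ring
  have hsum : ∀ g : Fin q → ℝ, ∑ j, (Matrix.toLin' M g j) ^ 2 =
      ∑ j, meanDev g j ^ 2 + q * κ ^ 2 * ((∑ i, g i) / q) ^ 2 := by
    intro g
    have h : ∀ j, (Matrix.toLin' M g j) ^ 2 = meanDev g j ^ 2 +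
        2 * (κ * ((∑ i, g i) / q)) * meanDev g j + κ ^ 2 * ((∑ i, g i) / q) ^ 2 := by
      intro j; rw [hMg]; ring
    rw [Finset.sum_congr rfl fun j _ => h j, Finset.sum_add_distrib, Finset.sum_add_distrib,
      ← Finset.mul_sum, sum_meanDev hq]
    simp
    ring
  have hint : ∀ g : Fin q → ℝ, gaussDens g * Real.exp (-(t * ∑ j, meanDev g j ^ 2)) =
      Real.exp (-(1 / 2 + t) * ∑ j, (Matrix.toLin' M g j) ^ 2) := by
    intro g
    rw [gaussDens, ← Real.exp_add, hsum, hκ2, sum_sq_eq_meanDev hq]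
    congr 1
    have : 1 + 2 * t ≠ 0 := by positivity
    field_simp
    ring
  simp_rw [hint]
  have hmap := Real.map_matrix_volume_pi_eq_smul_volume_pi (M := M) (by rw [hdet]; exact hκ0.ne')
  have hcont : Continuous fun y : Fin q → ℝ => Real.exp (-(1 / 2 + t) * ∑ j, y j ^ 2) := by
    fun_prop
  have hMc : Continuous (Matrix.toLin' M) := LinearMap.continuous_of_finiteDimensional _
  have h := integral_map (μ := (volume : Measure (Fin q → ℝ))) hMc.aemeasurable
    (hcont.aestronglyMeasurable (μ := Measure.map (Matrix.toLin' M) volume))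
  rw [← h, hmap, integral_smul_measure, integral_gauss_pi (by positivity), hdet,
    ENNReal.toReal_ofReal (abs_nonneg _), abs_of_pos (by positivity), hκ, inv_inv, smul_eq_mul,
    show Real.pi / (1 / 2 + t) = (2 * Real.pi) / (1 + 2 * t) by field_simp,
    Real.div_rpow (by positivity) (by positivity), Real.sqrt_eq_rpow,
    show -(((q : ℝ) - 1) / 2) = 1 / 2 - (q : ℝ) / 2 by ring,
    Real.rpow_sub (by positivity)]
  ring

/-! ### The characteristic function of a random colour -/

lemma norm_colorChar_le {q : ℕ} (hq : 0 < q) (β : ℝ) (g : Fin q → ℝ) : ‖colorChar β g‖ ≤ 1 := by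
  unfold colorChar
  rw [norm_div, Complex.norm_natCast, div_le_one (by positivity)]
  refine (norm_sum_le _ _).trans ?_
  simp only [Complex.norm_exp_ofReal_mul_I]
  simp

lemma colorChar_pow {q : ℕ} (n : ℕ) (β : ℝ) (g : Fin q → ℝ) :
    colorChar β g ^ n = ∑ v ∈ Finset.Nat.antidiagonalTuple q n,
      (((Nat.multinomial Finset.univ v : ℝ) / (q : ℝ) ^ n : ℝ) : ℂ) *
        Complex.exp (((∑ j, (β * ((v j : ℝ) - n / q)) * g j : ℝ) : ℂ) * Complex.I) := by
  unfold colorChar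
  rw [div_pow, sum_pow_antidiagonalTuple, Finset.sum_div]
  refine Finset.sum_congr rfl fun v hv => ?_
  rw [Finset.Nat.mem_antidiagonalTuple] at hv
  have hv' : ∑ j, (v j : ℝ) = n := by exact_mod_cast hv
  have e : ∏ j, Complex.exp (((β * meanDev g j : ℝ) : ℂ) * Complex.I) ^ v j =
      Complex.exp (((∑ j, (β * ((v j : ℝ) - n / q)) * g j : ℝ) : ℂ) * Complex.I) := by
    simp_rw [← Complex.exp_nat_mul]
    rw [← Complex.exp_sum]
    congr 1
    have : ∑ j, (β * ((v j : ℝ) - n / q)) * g j = ∑ j, (v j : ℝ) * (β * meanDev g j) := by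
      have h1 : ∀ j, (v j : ℝ) * (β * meanDev g j) =
        β * (v j * g j) - β * ((∑ i, g i) / q) * v j := by intro j; unfold meanDev; ring
      have h2 : ∀ j, (β * ((v j : ℝ) - n / q)) * g j =
        β * (v j * g j) - β * (n / q) * g j := by intro j; ring
      simp_rw [h1, h2, Finset.sum_sub_distrib, ← Finset.mul_sum, hv']
      ring
    rw [this]
    push_cast
    rw [Finset.sum_mul]
    exact Finset.sum_congr rfl fun _ _ => by ring
  rw [e]
  push_cast
  ring

/-- A Gaussian is its own Fourier transform, so `e ^ (-(β²/2) |z|²)` is a Gaussian average of the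
characters `e ^ (i β ⟨g, z⟩)`; averaged over colour counts, these give powers of `colorChar`. -/
lemma integral_colorChar_pow {q : ℕ} (n : ℕ) (β : ℝ) :
    ∫ g : Fin q → ℝ, (gaussDens g : ℂ) * colorChar β g ^ n =
      (((2 * Real.pi) ^ ((q : ℝ) / 2) * laplaceCounts q n β : ℝ) : ℂ) := by
  simp_rw [colorChar_pow, Finset.mul_sum]
  rw [integral_finsetSum]
  · rw [laplaceCounts, Finset.mul_sum, Complex.ofReal_sum]
    refine Finset.sum_congr rfl fun v _ => ?_
    simp_rw [mul_left_comm (gaussDens _ : ℂ)]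
    rw [integral_const_mul, integral_gauss_fourier]
    simp_rw [mul_pow]
    rw [← Finset.mul_sum, show -(1 / 2) * (β ^ 2 * ∑ j, ((v j : ℝ) - n / q) ^ 2) =
      -(β ^ 2 / 2) * ∑ j, ((v j : ℝ) - n / q) ^ 2 by ring]
    push_cast
    ring
  · intro v _
    simp_rw [mul_left_comm (gaussDens _ : ℂ)]
    refine Integrable.const_mul ?_ _
    refine Integrable.mono' integrable_gaussDens ?_ (ae_of_all _ fun g => ?_)
    · refine Continuous.aestronglyMeasurable ?_
      have := continuous_gaussDens (q := q)
      fun_prop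
    · rw [norm_mul, Complex.norm_exp_ofReal_mul_I, mul_one, Complex.norm_real, norm_gaussDens]

/-- Second-order Taylor expansion at `β = 0`. -/
lemma exists_colorChar_sub_exp_le {q : ℕ} (hq : 0 < q) (g : Fin q → ℝ) :
    ∃ C : ℝ, 0 ≤ C ∧ ∀ β : ℝ, |β| ≤ 1 →
      ‖colorChar β g - Complex.exp ((-(β ^ 2 / 2 * ((∑ j, meanDev g j ^ 2) / q)) : ℝ) : ℂ)‖ ≤
        C * |β| ^ 3 := by
  have hq' : (q : ℂ) ≠ 0 := by exact_mod_cast hq.ne'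
  set V : ℝ := (∑ j, meanDev g j ^ 2) / q with hV
  have hV0 : 0 ≤ V := by positivity
  refine ⟨(∑ j, |meanDev g j| ^ 3 * Real.exp |meanDev g j|) / q + V ^ 2 * Real.exp V,
    by positivity, fun β hβ => ?_⟩
  have t1 : ∀ j, ‖Complex.exp (((β * meanDev g j : ℝ) : ℂ) * Complex.I) -
      (1 + (β * meanDev g j) * Complex.I - (β ^ 2 / 2 * meanDev g j ^ 2))‖ ≤
      |β| ^ 3 * (|meanDev g j| ^ 3 * Real.exp |meanDev g j|) := by
    intro j
    have h := Complex.norm_exp_sub_sum_le_norm_mul_exp (((β * meanDev g j : ℝ) : ℂ) * Complex.I) 3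
    have e : ∑ m ∈ Finset.range 3, (((β * meanDev g j : ℝ) : ℂ) * Complex.I) ^ m / m.factorial =
        1 + (β * meanDev g j) * Complex.I - (β ^ 2 / 2 * meanDev g j ^ 2) := by
      simp [Finset.sum_range_succ, mul_pow, Nat.factorial]
      ring
    rw [e, norm_mul, Complex.norm_I, mul_one, Complex.norm_real, Real.norm_eq_abs, abs_mul] at h
    refine h.trans ?_
    rw [mul_pow, mul_assoc]
    gcongr
    nlinarith [abs_nonneg (meanDev g j)]
  have t2 : ‖colorChar β g - ((1 - β ^ 2 / 2 * V : ℝ) : ℂ)‖ ≤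
      (∑ j, |meanDev g j| ^ 3 * Real.exp |meanDev g j|) / q * |β| ^ 3 := by
    have e : colorChar β g - ((1 - β ^ 2 / 2 * V : ℝ) : ℂ) =
        (∑ j, (Complex.exp (((β * meanDev g j : ℝ) : ℂ) * Complex.I) -
          (1 + (β * meanDev g j) * Complex.I - (β ^ 2 / 2 * meanDev g j ^ 2)))) / q := by
      have hs : ∑ j, (meanDev g j : ℂ) = 0 := by exact_mod_cast sum_meanDev hq g
      rw [Finset.sum_sub_distrib, Finset.sum_sub_distrib, Finset.sum_add_distrib,
        ← Finset.sum_mul, ← Finset.mul_sum, ← Finset.mul_sum, hs, colorChar, hV]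
      push_cast
      simp only [mul_zero, zero_mul, add_zero, Finset.sum_const, Finset.card_univ, Fintype.card_fin,
        nsmul_eq_mul, mul_one, sub_div, div_self hq', mul_div_assoc]
    rw [e, norm_div, Complex.norm_natCast, div_mul_eq_mul_div]
    gcongr
    refine (norm_sum_le _ _).trans ((Finset.sum_le_sum fun j _ => t1 j).trans (le_of_eq ?_))
    rw [← Finset.mul_sum, mul_comm]
  have t3 : ‖((1 - β ^ 2 / 2 * V : ℝ) : ℂ) - Complex.exp ((-(β ^ 2 / 2 * V) : ℝ) : ℂ)‖ ≤
      V ^ 2 * Real.exp V * |β| ^ 3 := by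
    have h := Complex.norm_exp_sub_sum_le_norm_mul_exp ((-(β ^ 2 / 2 * V) : ℝ) : ℂ) 2
    have e : ∑ m ∈ Finset.range 2, ((-(β ^ 2 / 2 * V) : ℝ) : ℂ) ^ m / m.factorial =
        ((1 - β ^ 2 / 2 * V : ℝ) : ℂ) := by
      simp [Finset.sum_range_succ]
      ring
    rw [e, Complex.norm_real, Real.norm_eq_abs, abs_neg, abs_of_nonneg (by positivity)] at h
    rw [norm_sub_rev]
    refine h.trans ?_
    have hb2 : β ^ 2 ≤ 1 := by rw [← sq_abs]; exact pow_le_one₀ (abs_nonneg _) hβ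
    have hb4 : (β ^ 2) ^ 2 ≤ |β| ^ 3 := by
      have : (β ^ 2) ^ 2 = |β| ^ 3 * |β| := by rw [← sq_abs β]; ring
      rw [this]
      exact mul_le_of_le_one_right (by positivity) hβ
    have h1 : (β ^ 2 / 2 * V) ^ 2 ≤ V ^ 2 * |β| ^ 3 := by
      have : (β ^ 2 / 2 * V) ^ 2 = V ^ 2 * ((β ^ 2) ^ 2 / 4) := by ring
      rw [this]
      gcongr
      have : 0 ≤ (β ^ 2) ^ 2 := by positivity
      linarith
    have h2 : Real.exp (β ^ 2 / 2 * V) ≤ Real.exp V := by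
      apply Real.exp_le_exp.2; nlinarith
    calc _ ≤ (V ^ 2 * |β| ^ 3) * Real.exp V := by gcongr
      _ = _ := by ring
  calc _ ≤ _ := norm_sub_le_norm_sub_add_norm_sub _ ((1 - β ^ 2 / 2 * V : ℝ) : ℂ) _
    _ ≤ _ := add_le_add t2 t3
    _ = _ := by ring

lemma norm_pow_sub_pow_le_nat_mul {z w : ℂ} (hz : ‖z‖ ≤ 1) (hw : ‖w‖ ≤ 1) (n : ℕ) :
    ‖z ^ n - w ^ n‖ ≤ n * ‖z - w‖ := by
  induction n with
  | zero => simp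
  | succ k ih =>
    have e : z ^ (k + 1) - w ^ (k + 1) = z * (z ^ k - w ^ k) + (z - w) * w ^ k := by ring
    rw [e]
    refine (norm_add_le _ _).trans ?_
    rw [norm_mul, norm_mul, norm_pow]
    have h1 : ‖z‖ * ‖z ^ k - w ^ k‖ ≤ ‖z ^ k - w ^ k‖ :=
      mul_le_of_le_one_left (norm_nonneg _) hz
    have h2 : ‖z - w‖ * ‖w‖ ^ k ≤ ‖z - w‖ :=
      mul_le_of_le_one_right (norm_nonneg _) (pow_le_one₀ (norm_nonneg _) hw)
    push_cast
    linarith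

/-! ### Asymptotics -/

/-- The Laplace transform of the normalised colour counts is asymptotic to its Gaussian value. The
scale `β n` may vary with `n` as long as `n (β n)²` stays bounded; it need not converge. -/
lemma tendsto_laplaceCounts_sub {q : ℕ} (hq : 0 < q) (β : ℕ → ℝ) (K : ℝ)
    (hβ : ∀ n : ℕ, 1 ≤ n → n * β n ^ 2 ≤ K) :
    Tendsto (fun n : ℕ => laplaceCounts q n (β n) -
      (1 + 2 * (n * β n ^ 2 / (2 * q))) ^ (-(((q : ℝ) - 1) / 2))) atTop (nhds 0) := by
  have hq' : (q : ℝ) ≠ 0 := by positivity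
  set w : ℕ → (Fin q → ℝ) → ℝ := fun n g =>
    -(β n ^ 2 / 2 * ((∑ j, meanDev g j ^ 2) / q)) with hw
  have hw0 : ∀ n g, w n g ≤ 0 := by
    intro n g
    simp only [hw, neg_nonpos]
    positivity
  have hwn : ∀ n g, ‖Complex.exp (w n g : ℂ)‖ ≤ 1 := by
    intro n g
    rw [Complex.norm_exp, Complex.ofReal_re]
    exact Real.exp_le_one_iff.2 (hw0 n g)
  have hdens : Continuous (gaussDens : (Fin q → ℝ) → ℝ) := continuous_gaussDens
  have hdev : ∀ j, Continuous fun g : Fin q → ℝ => meanDev g j := continuous_meanDev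
  have hcc : ∀ n, Continuous fun g : Fin q → ℝ => colorChar (β n) g := by
    intro n; unfold colorChar; fun_prop
  have hwc : ∀ n, Continuous (w n) := by
    intro n; simp only [hw]; fun_prop
  have hβ0 : Tendsto β atTop (nhds 0) := by
    have h1 : Tendsto (fun n : ℕ => K / (n : ℝ)) atTop (nhds 0) :=
      tendsto_const_div_atTop_nhds_zero_nat K
    have h2 : Tendsto (fun n => β n ^ 2) atTop (nhds 0) := by
      refine squeeze_zero' (Eventually.of_forall fun n => sq_nonneg _) ?_ h1
      filter_upwards [eventually_ge_atTop 1] with n hn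
      have : (0 : ℝ) < n := by exact_mod_cast hn
      rw [le_div_iff₀ this, mul_comm]
      exact hβ n hn
    have h3 := h2.sqrt
    simp only [Real.sqrt_sq_eq_abs, Real.sqrt_zero] at h3
    exact (tendsto_zero_iff_abs_tendsto_zero _).2 h3
  have hlim : Tendsto (fun n => ∫ g : Fin q → ℝ,
      (gaussDens g : ℂ) * (colorChar (β n) g ^ n - Complex.exp (w n g : ℂ) ^ n)) atTop
      (nhds (∫ _ : Fin q → ℝ, (0 : ℂ))) := by
    refine tendsto_integral_of_dominated_convergence (fun g => gaussDens g * 2) ?_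
      (integrable_gaussDens.mul_const 2) ?_ ?_
    · intro n
      have := hcc n
      have := hwc n
      exact Continuous.aestronglyMeasurable (by fun_prop)
    · refine fun n => ae_of_all _ fun g => ?_
      rw [norm_mul, Complex.norm_real, norm_gaussDens]
      refine mul_le_mul_of_nonneg_left ?_ (Real.exp_pos _).le
      refine (norm_sub_le _ _).trans ?_
      rw [norm_pow, norm_pow]
      have h1 := pow_le_one₀ (n := n) (norm_nonneg _) (norm_colorChar_le hq (β n) g)
      have h2 := pow_le_one₀ (n := n) (norm_nonneg _) (hwn n g)
      linarith
    · refine ae_of_all _ fun g => ?_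
      obtain ⟨C, hC0, hC⟩ := exists_colorChar_sub_exp_le hq g
      rw [← mul_zero (gaussDens g : ℂ)]
      refine Tendsto.const_mul _ ?_
      have hb : Tendsto (fun n => C * K * |β n|) atTop (nhds 0) := by
        simpa using (hβ0.abs.const_mul (C * K))
      refine squeeze_zero_norm' ?_ hb
      have hsmall : ∀ᶠ n in atTop, |β n| ≤ 1 := by
        have := hβ0.abs
        rw [abs_zero] at this
        exact this.eventually (eventually_le_nhds zero_lt_one)
      filter_upwards [hsmall, eventually_ge_atTop 1] with n h1 hn
      refine (norm_pow_sub_pow_le_nat_mul (norm_colorChar_le hq _ g) (hwn n g) n).trans ?_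
      calc (n : ℝ) * ‖colorChar (β n) g - Complex.exp (w n g : ℂ)‖
          ≤ n * (C * |β n| ^ 3) := by gcongr; exact hC _ h1
        _ = (n * β n ^ 2) * (C * |β n|) := by rw [← sq_abs (β n)]; ring
        _ ≤ K * (C * |β n|) := by gcongr; exact hβ n hn
        _ = C * K * |β n| := by ring
  have hval : ∀ n, ∫ g : Fin q → ℝ,
      (gaussDens g : ℂ) * (colorChar (β n) g ^ n - Complex.exp (w n g : ℂ) ^ n) =
      (((2 * Real.pi) ^ ((q : ℝ) / 2) * (laplaceCounts q n (β n) -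
      (1 + 2 * (n * β n ^ 2 / (2 * q))) ^ (-(((q : ℝ) - 1) / 2))) : ℝ) : ℂ) := by
    intro n
    have hc1 := hcc n
    have hc2 := hwc n
    have i1 : Integrable fun g : Fin q → ℝ => (gaussDens g : ℂ) * colorChar (β n) g ^ n := by
      refine Integrable.mono' integrable_gaussDens
        (Continuous.aestronglyMeasurable (by fun_prop)) (ae_of_all _ fun g => ?_)
      rw [norm_mul, Complex.norm_real, norm_gaussDens, norm_pow]
      exact mul_le_of_le_one_right (Real.exp_pos _).le
        (pow_le_one₀ (norm_nonneg _) (norm_colorChar_le hq (β n) g))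
    have i2 : Integrable fun g : Fin q → ℝ =>
        (gaussDens g : ℂ) * Complex.exp (w n g : ℂ) ^ n := by
      refine Integrable.mono' integrable_gaussDens
        (Continuous.aestronglyMeasurable (by fun_prop)) (ae_of_all _ fun g => ?_)
      rw [norm_mul, Complex.norm_real, norm_gaussDens, norm_pow]
      exact mul_le_of_le_one_right (Real.exp_pos _).le
        (pow_le_one₀ (norm_nonneg _) (hwn n g))
    simp_rw [mul_sub]
    rw [integral_sub i1 i2, integral_colorChar_pow, Complex.ofReal_sub,
      ← integral_gauss_meanDev hq (t := n * β n ^ 2 / (2 * q)) (by positivity),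
      ← integral_complex_ofReal]
    congr 2
    ext g
    rw [← Complex.exp_nat_mul]
    push_cast
    congr 2
    simp only [hw]
    push_cast
    ring
  have hlim' := hlim
  simp_rw [hval] at hlim'
  rw [integral_zero] at hlim'
  have hre := (Complex.continuous_re.tendsto _).comp hlim'
  simp only [Function.comp_def, Complex.ofReal_re, Complex.zero_re] at hre
  have hpos : (2 * Real.pi) ^ ((q : ℝ) / 2) ≠ 0 := by positivity
  have := hre.const_mul ((2 * Real.pi) ^ ((q : ℝ) / 2))⁻¹
  simpa [inv_mul_cancel_left₀ hpos] using this

/-- With all powers divided out, each summand of `Wsum` is a power of `1 - x`, where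
`x = (∑ (v_j - n/q)²) / (n² (1 - 1/q))` lies in `[0, 1]`; replacing `(1 - x) ^ m` by
`e ^ (-m x)` gives `laplaceCounts`. -/
lemma abs_Wsum_div_sub_laplaceCounts_le {q n m : ℕ} (hq : 2 ≤ q) (hn : 1 ≤ n) (hm : 2 ≤ m)
    {β : ℝ} (hβ : β ^ 2 / 2 = m / (n ^ 2 * (1 - 1 / q))) :
    |Wsum q n m / ((n : ℝ) ^ (2 * m) * (1 - 1 / (q : ℝ)) ^ m * (q : ℝ) ^ n) -
      laplaceCounts q n β| ≤ 8 / m := by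
  have hn0 : (0 : ℝ) < n := by exact_mod_cast hn
  have hq2 : (2 : ℝ) ≤ q := by exact_mod_cast hq
  have hq0 : (0 : ℝ) < q := by linarith
  set p : ℝ := 1 - 1 / q with hp
  have hp0 : 0 < p := by
    have : 1 / (q : ℝ) < 1 := by rw [div_lt_one hq0]; linarith
    linarith
  have key : ∀ v ∈ Finset.Nat.antidiagonalTuple q n,
      |((n : ℝ) ^ 2 - ∑ i : Fin q, (v i : ℝ) ^ 2) ^ m / (n ^ (2 * m) * p ^ m) -
        Real.exp (-(β ^ 2 / 2) * ∑ j, ((v j : ℝ) - n / q) ^ 2)| ≤ 8 / m := by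
    intro v hv
    rw [Finset.Nat.mem_antidiagonalTuple] at hv
    have hv' : ∑ j, (v j : ℝ) = n := by exact_mod_cast hv
    set S : ℝ := ∑ j, ((v j : ℝ) - n / q) ^ 2 with hS
    have hS0 : 0 ≤ S := Finset.sum_nonneg fun _ _ => sq_nonneg _
    have hsq : ∑ i : Fin q, (v i : ℝ) ^ 2 = S + n ^ 2 / q := by
      rw [sum_sq_eq_meanDev (by omega) (fun j => (v j : ℝ)), hS]
      simp only [meanDev, hv', div_pow]
      congr 1
      field_simp
    have hle : ∑ i : Fin q, (v i : ℝ) ^ 2 ≤ n ^ 2 := by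
      rw [← hv']
      exact Finset.sum_sq_le_sq_sum_of_nonneg fun _ _ => Nat.cast_nonneg _
    have hnp : (n : ℝ) ^ 2 - (S + n ^ 2 / q) = n ^ 2 * p - S := by rw [hp]; ring
    have hx1 : S / (n ^ 2 * p) ≤ 1 := by
      rw [div_le_one (by positivity)]
      linarith
    have h := abs_one_sub_pow_sub_exp_le m hm (S / (n ^ 2 * p)) (by positivity) hx1
    convert h using 3
    · rw [hsq, hnp, pow_mul, ← mul_pow, ← div_pow]
      congr 1
      field_simp
    · rw [hβ]
      ring_nf
  have e : Wsum q n m / ((n : ℝ) ^ (2 * m) * p ^ m * (q : ℝ) ^ n) - laplaceCounts q n β =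
      ∑ v ∈ Finset.Nat.antidiagonalTuple q n,
        (Nat.multinomial Finset.univ v : ℝ) / (q : ℝ) ^ n *
        (((n : ℝ) ^ 2 - ∑ i : Fin q, (v i : ℝ) ^ 2) ^ m / (n ^ (2 * m) * p ^ m) -
        Real.exp (-(β ^ 2 / 2) * ∑ j, ((v j : ℝ) - n / q) ^ 2)) := by
    rw [Wsum, laplaceCounts, Finset.sum_div, ← Finset.sum_sub_distrib]
    refine Finset.sum_congr rfl fun v _ => ?_
    rw [mul_sub, div_mul_div_comm, mul_comm ((q : ℝ) ^ n)]
  rw [e]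
  refine (Finset.abs_sum_le_sum_abs _ _).trans ?_
  calc _ ≤ ∑ v ∈ Finset.Nat.antidiagonalTuple q n,
        (Nat.multinomial Finset.univ v : ℝ) / (q : ℝ) ^ n * (8 / m) := by
        refine Finset.sum_le_sum fun v hv => ?_
        rw [abs_mul, abs_of_nonneg (by positivity)]
        exact mul_le_mul_of_nonneg_left (key v hv) (by positivity)
    _ = 8 / m := by rw [← Finset.sum_mul, sum_multinomial_div q n (by omega), one_mul]

theorem colored_multigraph_asymptotics (q : ℕ) (hq : 2 ≤ q) (a b : ℝ)
    (ha : 0 < a) (hab : a ≤ b) (m : ℕ → ℕ)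
    (hm : ∀ n : ℕ, 1 ≤ n → a ≤ (m n : ℝ) / n ∧ (m n : ℝ) / n ≤ b) :
    Tendsto (fun n : ℕ =>
      Wsum q n (m n) /
        ( (n : ℝ) ^ (2 * m n) *
          (1 + (2 / ((q : ℝ) - 1)) * ((m n : ℝ) / n)) ^ (-(((q : ℝ) - 1) / 2)) *
          (1 - 1 / (q : ℝ)) ^ (m n) * (q : ℝ) ^ n ))
      atTop (nhds 1) := by
  have hq2 : (2 : ℝ) ≤ q := by exact_mod_cast hq
  have hq0 : (0 : ℝ) < q := by linarith
  have hq1 : (0 : ℝ) < q - 1 := by linarith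
  set p : ℝ := 1 - 1 / q with hp
  have hpq : p = (q - 1) / q := by rw [hp]; field_simp
  have hp0 : 0 < p := by rw [hpq]; positivity
  set L : ℕ → ℝ := fun n =>
    (1 + (2 / ((q : ℝ) - 1)) * ((m n : ℝ) / n)) ^ (-(((q : ℝ) - 1) / 2)) with hL
  set R : ℕ → ℝ := fun n =>
    Wsum q n (m n) / ((n : ℝ) ^ (2 * m n) * p ^ m n * (q : ℝ) ^ n) with hR
  -- The scale for which `e ^ (-β² S / 2)` replaces `(1 - S / (n² p)) ^ m`.
  set β : ℕ → ℝ := fun n => Real.sqrt (2 * (m n / (n ^ 2 * p))) with hβ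
  have hβ2 : ∀ n, β n ^ 2 / 2 = m n / (n ^ 2 * p) := by
    intro n
    simp only [hβ]
    rw [Real.sq_sqrt (by positivity)]
    ring
  have hnβ : ∀ n : ℕ, 1 ≤ n → n * β n ^ 2 = 2 / p * (m n / n) := by
    intro n hn
    have hn0 : (0 : ℝ) < n := by exact_mod_cast hn
    have : β n ^ 2 = 2 * (m n / (n ^ 2 * p)) := by rw [← hβ2]; ring
    rw [this]
    field_simp
  have hT := tendsto_laplaceCounts_sub (by omega : 0 < q) β (2 / p * b) (by
    intro n hn
    rw [hnβ n hn]
    have := (hm n hn).2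
    gcongr)
  have hRT : Tendsto (fun n => R n - laplaceCounts q n (β n)) atTop (nhds 0) := by
    have hz : Tendsto (fun n : ℕ => 8 / a / (n : ℝ)) atTop (nhds 0) :=
      tendsto_const_div_atTop_nhds_zero_nat _
    refine squeeze_zero_norm' ?_ hz
    obtain ⟨N, hN⟩ := exists_nat_ge (2 / a)
    filter_upwards [eventually_ge_atTop 1, eventually_ge_atTop N] with n hn hnN
    have hn0 : (0 : ℝ) < n := by exact_mod_cast hn
    have hmn : a * n ≤ m n := (le_div_iff₀ hn0).1 (hm n hn).1
    have h2 : 2 ≤ m n := by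
      have h3 : (N : ℝ) ≤ n := by exact_mod_cast hnN
      have h4 : 2 ≤ n * a := (div_le_iff₀ ha).1 (hN.trans h3)
      have : (2 : ℝ) ≤ m n := by linarith
      exact_mod_cast this
    rw [Real.norm_eq_abs]
    refine (abs_Wsum_div_sub_laplaceCounts_le hq hn h2 (hβ2 n)).trans ?_
    rw [div_div]
    gcongr
  have hRL : Tendsto (fun n => R n - L n) atTop (nhds 0) := by
    have h := hRT.add hT
    rw [add_zero] at h
    refine h.congr' ?_
    filter_upwards [eventually_ge_atTop 1] with n hn
    have : 2 * (n * β n ^ 2 / (2 * q)) = (2 / ((q : ℝ) - 1)) * ((m n : ℝ) / n) := by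
      rw [hnβ n hn, hpq]
      field_simp
    rw [this]
    simp only [hL]
    ring
  have hL0 : ∀ n, 0 < L n := fun n => by
    simp only [hL]
    positivity
  -- Boundedness of `m n / n` keeps `L n` away from zero.
  set B : ℝ := (1 + (2 / ((q : ℝ) - 1)) * b) ^ (((q : ℝ) - 1) / 2) with hB
  have hLinv : ∀ n, 1 ≤ n → (L n)⁻¹ ≤ B := by
    intro n hn
    simp only [hL, hB]
    rw [Real.rpow_neg (by positivity), inv_inv]
    have := (hm n hn).2
    gcongr
  have hdiv : Tendsto (fun n => (R n - L n) * (L n)⁻¹) atTop (nhds 0) := by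
    have hz : Tendsto (fun n => |R n - L n| * B) atTop (nhds 0) := by
      simpa using hRL.abs.mul_const B
    refine squeeze_zero_norm' ?_ hz
    filter_upwards [eventually_ge_atTop 1] with n hn
    rw [norm_mul, Real.norm_eq_abs, Real.norm_of_nonneg (inv_pos.2 (hL0 n)).le]
    exact mul_le_mul_of_nonneg_left (hLinv n hn) (abs_nonneg _)
  have h1 := hdiv.add_const 1
  rw [zero_add] at h1
  refine h1.congr fun n => ?_
  have hne := (hL0 n).ne'
  rw [sub_mul, mul_inv_cancel₀ hne, sub_add_cancel]
  change R n * (L n)⁻¹ = Wsum q n (m n) / ((n : ℝ) ^ (2 * m n) * L n * p ^ m n * (q : ℝ) ^ n)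
  simp only [hR]
  rw [← div_eq_mul_inv, div_div]
  congr 1
  ring
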